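/- Chebyshev–Bessel representation of scaled exponential divided differences: let β ≥ 0, let x_0,…,x_q ∈ [a,b] be pairwise distinct with a < b, set c = (b−a)/2 > 0, d = (a+b)/2, y_j = (x_j − d)/c. Then the q-th divided difference of f_β(x) = e^{−βx} equals (e^{−βd}/c^q) · ( I_0(βc)·T_0[y_0,…,y_q] + 2·Σ_{n=1}^{∞} (−1)^n I_n(βc)·T_n[y_0,…,y_q] ), with absolutely convergent series. -/

import Mathlib

/-- Divided difference of order `q` of `f` on nodes `x 0, …, x q`. -/
noncomputable def divDiff (f : ℝ → ℝ) : (q : ℕ) → (Fin (q + 1) → ℝ) → ℝ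
  | 0, x => f (x 0)
  | q + 1, x =>
      (divDiff f q (fun i => x i.succ) - divDiff f q (fun i => x i.castSucc)) /
        (x (Fin.last (q + 1)) - x 0)

/-- Chebyshev polynomial of the first kind, as a real function. -/
noncomputable def chebT (n : ℤ) : ℝ → ℝ := fun y => (Polynomial.Chebyshev.T ℝ n).eval y

/-- Modified Bessel function of the first kind of integer order `n`. -/
noncomputable def besselI (n : ℕ) (c : ℝ) : ℝ :=
  ∑' m : ℕ, (c / 2) ^ (2 * m + n) / (m.factorial * (m + n).factorial)

/-! Multiplying the exponential series of `s * t / 2` and `s * t⁻¹ / 2` and collecting the powers of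
`t` gives the Laurent expansion `exp (s / 2 * (t + t⁻¹)) = ∑ₙ I_|n|(s) tⁿ`, over `n : ℤ`. Every real
`y` is `cos θ` for some complex `θ`, so averaging the expansions at `t = exp (± θ I)` yields
`exp (s * y) = ∑ₙ I_|n|(s) Tₙ(y)`. A divided difference is a finite linear combination of values,
hence can be taken termwise, and the affine substitution `x = c * y + d` contributes the factor
`exp (-β * d) / c ^ q`. The signs come from `Iₙ(-s) = (-1)ⁿ Iₙ(s)`. -/

theorem divDiff_const_mul (K : ℝ) (f : ℝ → ℝ) {q : ℕ} (x : Fin (q + 1) → ℝ) :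
    divDiff (fun t => K * f t) q x = K * divDiff f q x := by
  induction q with
  | zero => rfl
  | succ q ih => simp only [divDiff, ih, ← mul_sub, mul_div_assoc]

theorem divDiff_comp_affine (f : ℝ → ℝ) (c d : ℝ) {q : ℕ} (y : Fin (q + 1) → ℝ) :
    divDiff (fun t => f (c * t + d)) q y = c ^ q * divDiff f q (fun i => c * y i + d) := by
  induction q with
  | zero => simp [divDiff]
  | succ q ih =>
    simp only [divDiff, ih, add_sub_add_right_eq_sub, ← mul_sub]
    rcases eq_or_ne c 0 with rfl | hc
    · simp
    · field_simp
      ring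

theorem divDiff_exp_affine (s c d : ℝ) {q : ℕ} (y : Fin (q + 1) → ℝ) :
    c ^ q * divDiff (fun t => Real.exp (s * t)) q (fun i => c * y i + d) =
      Real.exp (s * d) * divDiff (fun t => Real.exp (s * c * t)) q y := by
  rw [← divDiff_comp_affine, ← divDiff_const_mul]
  congr 1
  funext t
  rw [← Real.exp_add]
  ring_nf

theorem hasSum_divDiff {ι : Type*} {F : ι → ℝ → ℝ} {f : ℝ → ℝ} {q : ℕ} {x : Fin (q + 1) → ℝ}
    (h : ∀ i, HasSum (fun n => F n (x i)) (f (x i))) :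
    HasSum (fun n => divDiff (F n) q x) (divDiff f q x) := by
  induction q with
  | zero => exact h 0
  | succ q ih =>
    have h_succ := ih (x := fun i => x i.succ) fun i => h i.succ
    have h_castSucc := ih (x := fun i => x i.castSucc) fun i => h i.castSucc
    exact (h_succ.sub h_castSucc).div_const _

theorem chebT_neg (n : ℤ) : chebT (-n) = chebT n := by
  unfold chebT
  rw [Polynomial.Chebyshev.T_neg]

theorem ofReal_chebT_of_cos_eq {y : ℝ} {θ : ℂ} (h : Complex.cos θ = y) (n : ℤ) :
    (chebT n y : ℂ) = Complex.cos (n * θ) := by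
  rw [chebT, Polynomial.Chebyshev.complex_ofReal_eval_T, ← h,
    Polynomial.Chebyshev.T_complex_cos]

theorem besselI_neg (n : ℕ) (s : ℝ) : besselI n (-s) = (-1) ^ n * besselI n s := by
  simp only [besselI, ← tsum_mul_left]
  refine tsum_congr fun m => ?_
  rw [neg_div, neg_pow, pow_add (-1 : ℝ), (even_two_mul m).neg_one_pow, one_mul, mul_div_assoc]

theorem hasSum_prod_exp_add (u v : ℂ) :
    HasSum (fun p : ℕ × ℕ => u ^ p.1 / p.1.factorial * (v ^ p.2 / p.2.factorial))
      (Complex.exp (u + v)) := by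
  have h_summable := summable_mul_of_summable_norm (NormedSpace.norm_expSeries_div_summable u)
    (NormedSpace.norm_expSeries_div_summable v)
  have h_mul := (NormedSpace.expSeries_div_hasSum_exp u).mul
    (NormedSpace.expSeries_div_hasSum_exp v) h_summable
  rwa [← Complex.exp_eq_exp_ℂ, ← Complex.exp_add] at h_mul

/-- The bijection of `ℤ × ℕ` with `ℕ × ℕ` inverse to `(j, k) ↦ (j - k, min j k)`. It turns a
double power series in `t` and `t⁻¹` into a Laurent series, the first component being the exponent
of `t`. -/
def diffMinEquiv : ℤ × ℕ ≃ ℕ × ℕ where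
  toFun p := (p.2 + p.1.toNat, p.2 + (-p.1).toNat)
  invFun p := ((p.1 : ℤ) - p.2, min p.1 p.2)
  left_inv := fun _ => Prod.ext (by grind) (by grind)
  right_inv := fun _ => Prod.ext (by grind) (by grind)

theorem expSeries_mul_term_diffMinEquiv (z : ℂ) {t : ℂ} (ht : t ≠ 0) (n : ℤ) (m : ℕ) :
    (z * t) ^ (diffMinEquiv (n, m)).1 / (diffMinEquiv (n, m)).1.factorial *
        ((z * t⁻¹) ^ (diffMinEquiv (n, m)).2 / (diffMinEquiv (n, m)).2.factorial) =
      z ^ (2 * m + n.natAbs) / (m.factorial * (m + n.natAbs).factorial) * t ^ n := by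
  obtain ⟨k, rfl | rfl⟩ := n.eq_nat_or_neg
  all_goals
    simp only [diffMinEquiv, Equiv.coe_fn_mk, Int.toNat_natCast, Int.toNat_neg_natCast, neg_neg,
      Int.natAbs_neg, Int.natAbs_natCast, zpow_neg, zpow_natCast, add_zero, mul_pow, pow_add,
      two_mul, inv_pow]
    field_simp

theorem ofReal_besselI (n : ℕ) (s : ℝ) :
    (besselI n s : ℂ) =
      ∑' m : ℕ, (s / 2 : ℂ) ^ (2 * m + n) / (m.factorial * (m + n).factorial) := by
  simp [besselI, Complex.ofReal_tsum]

theorem hasSum_besselI_mul_zpow (s : ℝ) {t : ℂ} (ht : t ≠ 0) :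
    HasSum (fun n : ℤ => (besselI n.natAbs s : ℂ) * t ^ n)
      (Complex.exp (s / 2 * (t + t⁻¹))) := by
  have h := diffMinEquiv.hasSum_iff.mpr (hasSum_prod_exp_add (s / 2 * t) (s / 2 * t⁻¹))
  rw [← mul_add] at h
  refine (h.prod_fiberwise fun n => (h.summable.prod_factor n).hasSum).congr_fun fun n => ?_
  simp only [Function.comp_apply, expSeries_mul_term_diffMinEquiv _ ht, tsum_mul_right,
    ofReal_besselI]

theorem hasSum_besselI_mul_cos (s : ℝ) (θ : ℂ) :
    HasSum (fun n : ℤ => (besselI n.natAbs s : ℂ) * Complex.cos (n * θ))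
      (Complex.exp (s * Complex.cos θ)) := by
  have laurent (φ : ℂ) : HasSum
      (fun n : ℤ => (besselI n.natAbs s : ℂ) * Complex.exp (n * φ * Complex.I))
      (Complex.exp (s * Complex.cos φ)) := by
    convert hasSum_besselI_mul_zpow s (Complex.exp_ne_zero (φ * Complex.I)) using 1
    · simp only [← Complex.exp_int_mul, mul_assoc]
    · rw [← Complex.exp_neg, Complex.cos]
      ring_nf
  have symmetrized := ((laurent θ).add (laurent (-θ))).div_const 2
  rw [Complex.cos_neg, add_self_div_two] at symmetrized
  refine symmetrized.congr_fun fun n => ?_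
  rw [Complex.cos]
  ring_nf

theorem hasSum_besselI_mul_chebT (s y : ℝ) :
    HasSum (fun n : ℤ => besselI n.natAbs s * chebT n y) (Real.exp (s * y)) := by
  obtain ⟨θ, hθ⟩ := Complex.cos_surjective (y : ℂ)
  rw [← Complex.hasSum_ofReal]
  simpa [ofReal_chebT_of_cos_eq hθ, hθ] using hasSum_besselI_mul_cos s θ

theorem hasSum_besselI_mul_divDiff_chebT (s : ℝ) {q : ℕ} (y : Fin (q + 1) → ℝ) :
    HasSum (fun n : ℤ => besselI n.natAbs s * divDiff (chebT n) q y)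
      (divDiff (fun t => Real.exp (s * t)) q y) := by
  simp only [← divDiff_const_mul]
  exact hasSum_divDiff fun i => hasSum_besselI_mul_chebT s (y i)

theorem summable_besselI_mul_divDiff_chebT (s : ℝ) {q : ℕ} (y : Fin (q + 1) → ℝ) :
    Summable (fun n : ℕ => besselI (n + 1) s * divDiff (chebT (n + 1)) q y) := by
  have h_inj : Function.Injective fun n : ℕ => ((n + 1 : ℕ) : ℤ) :=
    Nat.cast_injective.comp (add_left_injective 1)
  have h := (hasSum_besselI_mul_divDiff_chebT s y).summable.comp_injective h_inj
  simp only [Function.comp_def, Int.natAbs_natCast] at h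
  exact_mod_cast h

theorem divDiff_exp_eq_tsum (s : ℝ) {q : ℕ} (y : Fin (q + 1) → ℝ) :
    divDiff (fun t => Real.exp (s * t)) q y =
      besselI 0 s * divDiff (chebT 0) q y +
        2 * ∑' n : ℕ, besselI (n + 1) s * divDiff (chebT (n + 1)) q y := by
  have h := hasSum_besselI_mul_divDiff_chebT s y
  have h_even : (fun n : ℤ => besselI n.natAbs s * divDiff (chebT n) q y).Even := fun n => by
    simp only [Int.natAbs_neg, chebT_neg]
  rw [← h.tsum_eq, tsum_int_eq_zero_add_two_mul_tsum_pnat h_even h.summable, two_nsmul,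
    ← two_mul]
  congr 2
  exact_mod_cast tsum_pnat_eq_tsum_succ (f := fun n : ℕ => besselI n s * divDiff (chebT n) q y)

theorem scaled_exp_divDiff_chebyshev_bessel_general (β : ℝ) {c : ℝ} (hc : c ≠ 0) (d : ℝ) (q : ℕ)
    (x : Fin (q + 1) → ℝ) (_hx : Function.Injective x) :
    let y : Fin (q + 1) → ℝ := fun i => (x i - d) / c
    Summable (fun n : ℕ =>
      |(-1 : ℝ) ^ (n + 1) * besselI (n + 1) (β * c) * divDiff (chebT (n + 1)) q y|) ∧
    divDiff (fun t => Real.exp (-β * t)) q x =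
      Real.exp (-β * d) / c ^ q *
        (besselI 0 (β * c) * divDiff (chebT 0) q y +
          2 * ∑' n : ℕ,
            (-1 : ℝ) ^ (n + 1) * besselI (n + 1) (β * c) * divDiff (chebT (n + 1)) q y) := by
  intro y
  have hxy : x = fun i => c * y i + d := by
    funext i
    simp only [y, mul_div_cancel₀ _ hc, sub_add_cancel]
  have h_rescale := divDiff_exp_affine (-β) c d y
  rw [neg_mul β c, ← hxy] at h_rescale
  have h_zero : besselI 0 (β * c) = besselI 0 (-(β * c)) := by
    rw [besselI_neg, pow_zero, one_mul]
  simp only [← besselI_neg, h_zero]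
  refine ⟨(summable_besselI_mul_divDiff_chebT _ y).abs, ?_⟩
  rw [← divDiff_exp_eq_tsum, div_mul_eq_mul_div, ← h_rescale,
    mul_div_cancel_left₀ _ (pow_ne_zero q hc)]

/-- Chebyshev–Bessel representation of scaled exponential divided differences. -/
theorem scaled_exp_divDiff_chebyshev_bessel (β : ℝ) (hβ : 0 ≤ β) (q : ℕ)
    (a b : ℝ) (hab : a < b)
    (x : Fin (q + 1) → ℝ) (hx : Function.Injective x)
    (hmem : ∀ i, x i ∈ Set.Icc a b) :
    let c := (b - a) / 2
    let d := (a + b) / 2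
    let y : Fin (q + 1) → ℝ := fun i => (x i - d) / c
    Summable (fun n : ℕ =>
      |(-1 : ℝ) ^ (n + 1) * besselI (n + 1) (β * c) * divDiff (chebT (n + 1)) q y|) ∧
    divDiff (fun t => Real.exp (-β * t)) q x =
      Real.exp (-β * d) / c ^ q *
        (besselI 0 (β * c) * divDiff (chebT 0) q y +
          2 * ∑' n : ℕ,
            (-1 : ℝ) ^ (n + 1) * besselI (n + 1) (β * c) * divDiff (chebT (n + 1)) q y) :=
  scaled_exp_divDiff_chebyshev_bessel_general β (half_pos (sub_pos.mpr hab)).ne'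
    ((a + b) / 2) q x hx
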